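/- arXiv:2308.13583 — 4 statements merged into one kernel-verified Lean document; each statement's English description precedes it below -/
import Mathlib

section
/- Let N be a positive integer, β, c ∈ ℂ with c ≠ ±1, and suppose all the coefficients below are well-defined. Define b_n(α,β,c) = -c + (c-1)n/(α+β+2n) + (c+1)(β+n+1)/(α+β+2n+2) for n even, and b_n(α,β,c) = c - (c-1)(n+1)/(α+β+2n+2) - (c+1)(β+n)/(α+β+2n) for n odd. Then for all n ≥ 0: b_{n+2N+1}(-2N-1, β, c) = -b_n(2N+1, β, -c). -/
open Polynomial Finset

/-- Diagonal recurrence coefficient `b_n(α,β,c)` of the monic big `-1` Jacobi polynomials. -/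
noncomputable def bcoef (α β c : ℂ) (n : ℕ) : ℂ :=
  if Even n then
    -c + (c - 1) * n / (α + β + 2 * n) + (c + 1) * (β + n + 1) / (α + β + 2 * n + 2)
  else
    c - (c - 1) * (n + 1) / (α + β + 2 * n + 2) - (c + 1) * (β + n) / (α + β + 2 * n)

/-- Subdiagonal recurrence coefficient `u_n(α,β,c)` of the monic big `-1` Jacobi polynomials. -/
noncomputable def ucoef (α β c : ℂ) (n : ℕ) : ℂ :=
  if Even n then (c - 1) ^ 2 * n * (α + β + n) / (α + β + 2 * n) ^ 2
  else (c + 1) ^ 2 * (α + n) * (β + n) / (α + β + 2 * n) ^ 2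

/-- Monic big `-1` Jacobi polynomials: `Q₀ = 1`, `Q_{n+1} = (X - b_n) Q_n - u_n Q_{n-1}`. -/
noncomputable def bigQ (α β c : ℂ) : ℕ → Polynomial ℂ
  | 0 => 1
  | 1 => X - C (bcoef α β c 0)
  | (n + 2) => (X - C (bcoef α β c (n + 1))) * bigQ α β c (n + 1)
      - C (ucoef α β c (n + 1)) * bigQ α β c n

/-!
Each fraction in `b_n` can be replaced by its complement: the numerators `n` and `α + β + n` add up
to the denominator `α + β + 2n`, and so do `β + n` and `α + n`; likewise over `α + β + 2n + 2`.
Taking complements in both fractions turns the constant term `∓c` into `±c`, the constant term of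
the opposite-parity branch. The change `(α, n) = (m, n) ↦ (-m, n + m)` preserves the denominators,
and for odd `m` it carries the complemented branch, up to `c ↦ -c` and sign, to the other branch.
-/

theorem mul_div_eq_sub_mul_div_of_add_eq {K : Type*} [DivisionRing K] {x y d : K} (a : K)
    (hd : d ≠ 0) (h : x + y = d) : a * x / d = a - a * y / d := by
  rw [eq_sub_iff_add_eq, ← add_div, ← mul_add, h, mul_div_cancel_right₀ a hd]

section

variable {α β : ℂ} {n : ℕ}

theorem bcoef_of_even (α β c : ℂ) (hn : Even n) :
    bcoef α β c n =
      -c + (c - 1) * n / (α + β + 2 * n) + (c + 1) * (β + n + 1) / (α + β + 2 * n + 2) :=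
  if_pos hn

theorem bcoef_of_odd (α β c : ℂ) (hn : Odd n) :
    bcoef α β c n =
      c - (c - 1) * (n + 1) / (α + β + 2 * n + 2) - (c + 1) * (β + n) / (α + β + 2 * n) :=
  if_neg (Nat.not_even_iff_odd.mpr hn)

theorem bcoef_of_even_eq_complement (c : ℂ) (hn : Even n)
    (h₀ : α + β + 2 * n ≠ 0) (h₂ : α + β + 2 * n + 2 ≠ 0) :
    bcoef α β c n =
      c - (c - 1) * (α + β + n) / (α + β + 2 * n)
        - (c + 1) * (α + n + 1) / (α + β + 2 * n + 2) := by
  have hleft : (n : ℂ) + (α + β + n) = α + β + 2 * n := by ring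
  have hright : (β + n + 1) + (α + n + 1) = α + β + 2 * n + 2 := by ring
  rw [bcoef_of_even α β c hn, mul_div_eq_sub_mul_div_of_add_eq (c - 1) h₀ hleft,
    mul_div_eq_sub_mul_div_of_add_eq (c + 1) h₂ hright]
  ring

theorem bcoef_of_odd_eq_complement (c : ℂ) (hn : Odd n)
    (h₀ : α + β + 2 * n ≠ 0) (h₂ : α + β + 2 * n + 2 ≠ 0) :
    bcoef α β c n =
      -c + (c - 1) * (α + β + n + 1) / (α + β + 2 * n + 2)
        + (c + 1) * (α + n) / (α + β + 2 * n) := by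
  have hleft : ((n : ℂ) + 1) + (α + β + n + 1) = α + β + 2 * n + 2 := by ring
  have hright : (β + n) + (α + n) = α + β + 2 * n := by ring
  rw [bcoef_of_odd α β c hn, mul_div_eq_sub_mul_div_of_add_eq (c - 1) h₂ hleft,
    mul_div_eq_sub_mul_div_of_add_eq (c + 1) h₀ hright]
  ring

theorem bcoef_neg_add_of_odd {m : ℕ} (hm : Odd m) (c : ℂ)
    (h₀ : m + β + 2 * n ≠ 0) (h₂ : m + β + 2 * n + 2 ≠ 0) :
    bcoef (-m) β c (n + m) = -bcoef m β (-c) n := by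
  have hden : -m + β + 2 * (n + m : ℕ) = m + β + 2 * n := by
    push_cast
    ring
  rcases Nat.even_or_odd n with hn | hn
  · rw [bcoef_of_odd _ _ _ (hn.add_odd hm), bcoef_of_even_eq_complement _ hn h₀ h₂, hden]
    push_cast
    ring
  · rw [bcoef_of_even _ _ _ (hn.add_odd hm), bcoef_of_odd_eq_complement _ hn h₀ h₂, hden]
    push_cast
    ring

end

/-- Shift identity for the diagonal coefficients: for `α = -2N-1`,
`b_{n+2N+1}(-2N-1, β, c) = -b_n(2N+1, β, -c)` for all `n ≥ 0`. -/
theorem bcoef_shift (N : ℕ) (hN : 1 ≤ N) (β c : ℂ)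
    (hc1 : c ≠ 1) (hc2 : c ≠ -1)
    (hden : ∀ m : ℕ, β + (2 * (N : ℂ) + 1) + 2 * m ≠ 0) :
    ∀ n : ℕ, bcoef (-2 * (N : ℂ) - 1) β c (n + 2 * N + 1)
      = -bcoef (2 * (N : ℂ) + 1) β (-c) n := by
  intro n
  have hα : -2 * (N : ℂ) - 1 = -(2 * N + 1 : ℕ) := by
    push_cast
    ring
  have h₀ : ((2 * N + 1 : ℕ) : ℂ) + β + 2 * n ≠ 0 := by
    convert hden n using 1
    push_cast
    ring
  have h₂ : ((2 * N + 1 : ℕ) : ℂ) + β + 2 * n + 2 ≠ 0 := by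
    convert hden (n + 1) using 1
    push_cast
    ring
  rw [hα, add_assoc n]
  exact_mod_cast bcoef_neg_add_of_odd (odd_two_mul_add_one N) c h₀ h₂
end

section
/- Let N be a positive integer and β, c ∈ ℂ with c ≠ ±1, and assume the recurrence coefficients b_n, u_n at parameters (α,β,c) = (-2N-1, β, c) are well-defined for 0 ≤ n ≤ 2N+1. Let Q_n(x) be the monic polynomials defined by Q_{-1} = 0, Q_0 = 1, and Q_{n+1}(x) = (x - b_n) Q_n(x) - u_n Q_{n-1}(x). Then Q_{2N+1}(x) = (x²-1)^N (x-1). -/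
/-!
Let `V_n` be the monic polynomials with recurrence
`V_{n+1} = (X - (-1)^n) V_n - v_n V_{n-1}`, where `v_n` are the recurrence coefficients of the
generalized Gegenbauer polynomials. The big `-1` Jacobi polynomials are a Geronimus transform of
them: `Q_n = V_n + r_n V_{n-1}` with explicit `r_n`, and `r_{2N+1} = 0` when `α = -2N-1`.

Iterating the recurrence of `V` twice gives a recurrence within each parity class, and comparing
the two classes yields `V_{2m+1}(α) = (X - 1) V_{2m}(α + 2)`. At `α = -2m-1`, for `m ≥ 1`, the
coefficient `v_{2m-1}(α + 2)` vanishes, so that `V_{2m}(α + 2) = (X + 1) V_{2m-1}(α + 2)`. The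
parameter `α + 2 = -2(m-1)-1` is again degenerate, and iterating gives
`V_{2N+1} = (X - 1) (X² - 1)^N`.
-/

open Polynomial Finset

section Recurrence

variable {R : Type*} [CommRing R]

/-- The monic polynomials with three-term recurrence coefficients `b` (diagonal) and `u`
(subdiagonal). The value `u 0` multiplies `p_{-1} = 0` in the recurrence, so it does not enter. -/
noncomputable def monicRecPoly (b u : ℕ → R) : ℕ → R[X]
  | 0 => 1
  | 1 => X - C (b 0)
  | n + 2 => (X - C (b (n + 1))) * monicRecPoly b u (n + 1) - C (u (n + 1)) * monicRecPoly b u n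

@[simp]
lemma monicRecPoly_zero (b u : ℕ → R) : monicRecPoly b u 0 = 1 := rfl

@[simp]
lemma monicRecPoly_one (b u : ℕ → R) : monicRecPoly b u 1 = X - C (b 0) := rfl

lemma monicRecPoly_add_two (b u : ℕ → R) (n : ℕ) :
    monicRecPoly b u (n + 2) =
      (X - C (b (n + 1))) * monicRecPoly b u (n + 1) - C (u (n + 1)) * monicRecPoly b u n := rfl

-- The three conditions on the coefficients are what comparing `V_n`, `V_{n-1}` and `V_{n-2}` gives
-- when `V_n + r_n V_{n-1}` is substituted into the recurrence with coefficients `b` and `u`.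
theorem monicRecPoly_succ_eq_add {a v b u r : ℕ → R} {n : ℕ} (hr : r 0 = 0)
    (hb : ∀ k ≤ n, b k = a k + r k - r (k + 1))
    (hu : ∀ k < n, u (k + 1) = v (k + 1) + r (k + 1) * (a k - b (k + 1)))
    (hur : ∀ k, k + 1 < n → u (k + 2) * r (k + 1) = r (k + 2) * v (k + 1)) :
    monicRecPoly b u (n + 1) = monicRecPoly a v (n + 1) + C (r (n + 1)) * monicRecPoly a v n := by
  induction n using Nat.twoStepInduction with
  | zero =>
    simp only [zero_add, monicRecPoly_one, monicRecPoly_zero, hb 0 le_rfl, hr, map_add, map_sub,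
      map_zero]
    ring
  | one =>
    simp only [monicRecPoly_add_two, zero_add, monicRecPoly_one, monicRecPoly_zero,
      hu 0 one_pos, hb 0 zero_le_one, hb 1 le_rfl, hr, map_add, map_sub, map_mul, map_zero]
    ring
  | more n ih₀ ih₁ =>
    have hQ₁ := ih₀ (fun k hk => hb k (by omega)) (fun k hk => hu k (by omega))
      (fun k hk => hur k (by omega))
    have hQ₂ := ih₁ (fun k hk => hb k (by omega)) (fun k hk => hu k (by omega))
      (fun k hk => hur k (by omega))
    have hbC := congrArg C (hb (n + 2) le_rfl)
    have huC := congrArg C (hu (n + 1) (by omega))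
    have hurC := congrArg C (hur n (by omega))
    have hV₂ := monicRecPoly_add_two a v n
    have hV₃ := monicRecPoly_add_two a v (n + 1)
    simp only [map_add, map_sub, map_mul] at hbC huC hurC
    rw [monicRecPoly_add_two b u (n + 1), hQ₁, hQ₂]
    linear_combination -hV₃ - monicRecPoly a v (n + 2) * hbC - monicRecPoly a v (n + 1) * huC
      - monicRecPoly a v n * hurC - C (r (n + 2)) * hV₂

end Recurrence

section PeriodicDiagonal

variable {R : Type*} [CommRing R] {a : ℕ → R}

lemma X_sub_C_mul_X_sub_C_succ_of_periodic (ha : Function.Periodic a 2) (n : ℕ) :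
    (X - C (a n)) * (X - C (a (n + 1))) = (X - C (a 0)) * (X - C (a 1)) := by
  induction n with
  | zero => rfl
  | succ n ih => rw [ha n, mul_comm, ih]

theorem monicRecPoly_add_four_of_periodic (ha : Function.Periodic a 2) (v : ℕ → R) (n : ℕ) :
    monicRecPoly a v (n + 4) =
      ((X - C (a 0)) * (X - C (a 1)) - C (v (n + 2) + v (n + 3))) * monicRecPoly a v (n + 2)
        - C (v (n + 1) * v (n + 2)) * monicRecPoly a v n := by
  have hV₂ := monicRecPoly_add_two a v n
  have hV₃ := monicRecPoly_add_two a v (n + 1)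
  have hV₄ := monicRecPoly_add_two a v (n + 2)
  rw [ha (n + 1)] at hV₄
  rw [← X_sub_C_mul_X_sub_C_succ_of_periodic ha (n + 1), map_add, map_mul]
  linear_combination hV₄ + (X - C (a (n + 1))) * hV₃ + C (v (n + 2)) * hV₂

theorem monicRecPoly_two_mul_add_one_eq_mul {v w : ℕ → R} {m : ℕ} (ha : Function.Periodic a 2)
    (hw : w 0 = 0)
    (hadd : ∀ k < m, v (2 * k + 1) + v (2 * k + 2) = w (2 * k) + w (2 * k + 1))
    (hmul : ∀ k, k + 1 < m →
      v (2 * k + 2) * v (2 * k + 3) = w (2 * k + 1) * w (2 * k + 2)) :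
    monicRecPoly a v (2 * m + 1) = (X - C (a 0)) * monicRecPoly a w (2 * m) := by
  induction m using Nat.twoStepInduction with
  | zero => simp
  | one =>
    have haddC := congrArg C (hadd 0 one_pos)
    simp only [mul_zero, zero_add, hw, map_add] at haddC
    simp only [mul_one, Nat.reduceAdd, monicRecPoly_add_two, zero_add, monicRecPoly_one,
      monicRecPoly_zero, ha 0]
    linear_combination -(X - C (a 0)) * haddC
  | more m ih₀ ih₁ =>
    have hV₁ := ih₀ (fun k hk => hadd k (by omega)) (fun k hk => hmul k (by omega))
    have hV₃ := ih₁ (fun k hk => hadd k (by omega)) (fun k hk => hmul k (by omega))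
    have hadd' := hadd (m + 1) (by omega)
    have hmul' := hmul m (by omega)
    simp only [mul_add, mul_one, add_assoc, Nat.reduceAdd] at hV₃ hadd' ⊢
    rw [monicRecPoly_add_four_of_periodic ha w, show 2 * m + 5 = 2 * m + 1 + 4 from rfl,
      monicRecPoly_add_four_of_periodic ha v, hV₁]
    simp only [add_assoc, Nat.reduceAdd]
    rw [hV₃, hadd', hmul']
    ring

end PeriodicDiagonal

section Gegenbauer

variable {K : Type*} [Field K]

/-- Subdiagonal recurrence coefficients of the monic generalized Gegenbauer polynomials, orthogonal
for the weight `|y|^α (1 - y²)^((β + 1) / 2)` when `κ = 1`; a general `κ` rescales `y²` by `κ`. -/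
def gegenbauerCoef (κ α β : K) (n : ℕ) : K :=
  κ * (if Even n then n * (β + n + 1) else (α + n) * (α + β + n + 1)) /
    ((α + β + 2 * n) * (α + β + 2 * n + 2))

lemma gegenbauerCoef_zero (κ α β : K) : gegenbauerCoef κ α β 0 = 0 := by
  simp [gegenbauerCoef]

lemma gegenbauerCoef_add_succ (κ : K) {α β : K} {n : ℕ} (hn : Even n)
    (h : ∀ k ∈ Icc (n + 1) (n + 3), α + β + 2 * k ≠ 0) :
    gegenbauerCoef κ α β (n + 1) + gegenbauerCoef κ α β (n + 2) =
      gegenbauerCoef κ (α + 2) β n + gegenbauerCoef κ (α + 2) β (n + 1) := by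
  -- Trading `β` for the denominator `s` lets `field_simp` and `ring` treat `s` as an atom.
  obtain ⟨s, hs⟩ : ∃ s, s = α + β + 2 * n + 2 := ⟨_, rfl⟩
  have hv₁ : α + β + 2 * ↑(n + 1) = s := by push_cast; linear_combination -hs
  have hv₂ : α + β + 2 * ↑(n + 2) = s + 2 := by push_cast; linear_combination -hs
  have hw₁ : α + 2 + β + 2 * n = s := by linear_combination -hs
  have hw₂ : α + 2 + β + 2 * ↑(n + 1) = s + 2 := by push_cast; linear_combination -hs
  have h₁ : s ≠ 0 := hv₁ ▸ h (n + 1) (by simp)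
  have h₂ : s + 2 ≠ 0 := hv₂ ▸ h (n + 2) (by simp)
  have h₃ : s + 2 + 2 ≠ 0 := by convert h (n + 3) (by simp) using 1; push_cast; rw [hs]; ring
  obtain rfl : β = s - α - 2 * n - 2 := by linear_combination -hs
  simp only [gegenbauerCoef, hv₁, hv₂, hw₁, hw₂, Nat.even_add_one, hn, not_true, not_false_iff,
    if_true, if_false]
  field_simp
  push_cast
  ring

lemma gegenbauerCoef_mul_succ (κ α β : K) {n : ℕ} (hn : Even n) :
    gegenbauerCoef κ α β (n + 2) * gegenbauerCoef κ α β (n + 3) =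
      gegenbauerCoef κ (α + 2) β (n + 1) * gegenbauerCoef κ (α + 2) β (n + 2) := by
  simp only [gegenbauerCoef, Nat.even_add_one, hn, not_true, not_false_iff, if_true, if_false]
  push_cast
  ring

lemma gegenbauerCoef_eq_zero_of_odd (κ : K) {α : K} (β : K) {n : ℕ} (hn : Odd n)
    (hα : α + n = 0) : gegenbauerCoef κ α β n = 0 := by
  simp [gegenbauerCoef, Nat.not_even_iff_odd.2 hn, hα]

variable {a : ℕ → K}

theorem monicRecPoly_gegenbauerCoef_two_mul_add_one (ha : Function.Periodic a 2) (κ : K)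
    {α β : K} {m : ℕ} (h : ∀ k ∈ Icc 1 (2 * m + 1), α + β + 2 * k ≠ 0) :
    monicRecPoly a (gegenbauerCoef κ α β) (2 * m + 1) =
      (X - C (a 0)) * monicRecPoly a (gegenbauerCoef κ (α + 2) β) (2 * m) :=
  monicRecPoly_two_mul_add_one_eq_mul ha (gegenbauerCoef_zero κ (α + 2) β)
    (fun i hi => gegenbauerCoef_add_succ κ (even_two_mul i) fun k hk =>
      h k (Icc_subset_Icc (by omega) (by omega) hk))
    (fun i _ => gegenbauerCoef_mul_succ κ α β (even_two_mul i))

theorem monicRecPoly_gegenbauerCoef_eq_mul_pow (ha : Function.Periodic a 2) (κ : K) {α β : K}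
    {m : ℕ} (hα : α + 2 * m + 1 = 0) (h : ∀ k ∈ Icc 1 (2 * m + 1), α + β + 2 * k ≠ 0) :
    monicRecPoly a (gegenbauerCoef κ α β) (2 * m + 1) =
      (X - C (a 0)) * ((X - C (a 0)) * (X - C (a 1))) ^ m := by
  induction m generalizing α with
  | zero => simp
  | succ m ih =>
    push_cast at hα
    have hv : gegenbauerCoef κ (α + 2) β (2 * m + 1) = 0 :=
      gegenbauerCoef_eq_zero_of_odd κ β (odd_two_mul_add_one m)
        (by push_cast; linear_combination hα)
    have ha' : a (2 * m + 1) = a 1 := by simpa [add_comm, mul_comm] using ha.nat_mul m 1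
    have ih' := ih (α := α + 2) (by linear_combination hα) fun k hk => by
      convert h (k + 1) (by simp only [mem_Icc] at hk ⊢; omega) using 1
      push_cast
      ring
    rw [monicRecPoly_gegenbauerCoef_two_mul_add_one ha κ h, mul_add_one, monicRecPoly_add_two,
      hv, ha', ih', map_zero]
    ring

end Gegenbauer

section BigQ

/-- The coefficients `r_n` for which `Q_n = V_n + r_n V_{n-1}`, where `V_n` has the recurrence
coefficients `(-1)^n` and `gegenbauerCoef (c ^ 2 - 1) α β`. -/
noncomputable def connectionCoef (α β c : ℂ) (n : ℕ) : ℂ :=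
  (if Even n then (c - 1) * n else (c + 1) * (α + n)) / (α + β + 2 * n)

lemma connectionCoef_zero (α β c : ℂ) : connectionCoef α β c 0 = 0 := by
  simp [connectionCoef]

variable {α β : ℂ} {n : ℕ}

lemma bcoef_eq_add_sub (c : ℂ) (h₁ : α + β + 2 * n ≠ 0) (h₂ : α + β + 2 * n + 2 ≠ 0) :
    bcoef α β c n = (-1) ^ n + connectionCoef α β c n - connectionCoef α β c (n + 1) := by
  obtain ⟨s, hs⟩ : ∃ s, α + β + 2 * n = s := ⟨_, rfl⟩
  have hs' : α + β + 2 * ↑(n + 1) = s + 2 := by push_cast; linear_combination hs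
  obtain rfl : β = s - α - 2 * n := by linear_combination hs
  rw [hs] at h₁ h₂
  by_cases hn : Even n
  · simp only [bcoef, connectionCoef, hs, hs', Nat.even_add_one, hn, not_true, if_true, if_false,
      hn.neg_one_pow]
    field_simp
    push_cast
    ring
  · simp only [bcoef, connectionCoef, hs, hs', Nat.even_add_one, hn, not_false_iff, if_true,
      if_false, (Nat.not_even_iff_odd.1 hn).neg_one_pow]
    field_simp
    push_cast
    ring

lemma ucoef_eq_sub_mul (c : ℂ) (h₁ : α + β + 2 * n ≠ 0) (h₂ : α + β + 2 * n + 2 ≠ 0) :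
    ucoef α β c n = gegenbauerCoef (c ^ 2 - 1) α β n
      - connectionCoef α β c n * ((-1) ^ n + bcoef α β c n) := by
  obtain ⟨s, hs⟩ : ∃ s, α + β + 2 * n = s := ⟨_, rfl⟩
  obtain rfl : β = s - α - 2 * n := by linear_combination hs
  rw [hs] at h₁ h₂
  by_cases hn : Even n
  · simp only [ucoef, gegenbauerCoef, bcoef, connectionCoef, hs, hn, if_true, hn.neg_one_pow]
    field_simp
    ring
  · simp only [ucoef, gegenbauerCoef, bcoef, connectionCoef, hs, hn, if_false,
      (Nat.not_even_iff_odd.1 hn).neg_one_pow]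
    field_simp
    ring

lemma ucoef_succ_mul_connectionCoef (α β c : ℂ) (n : ℕ) :
    ucoef α β c (n + 1) * connectionCoef α β c n =
      connectionCoef α β c (n + 1) * gegenbauerCoef (c ^ 2 - 1) α β n := by
  obtain ⟨t, ht⟩ : ∃ t, α + β + 2 * n + 2 = t := ⟨_, rfl⟩
  obtain ⟨s, hs⟩ : ∃ s, α + β + 2 * n = s := ⟨_, rfl⟩
  have ht' : α + β + 2 * ↑(n + 1) = t := by push_cast; linear_combination ht
  rw [hs] at ht
  by_cases hn : Even n
  all_goals
    simp only [ucoef, gegenbauerCoef, connectionCoef, hs, ht, ht', Nat.even_add_one, hn, not_true,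
      not_false_iff, if_true, if_false]
    push_cast
    ring

lemma bigQ_eq_monicRecPoly (α β c : ℂ) (n : ℕ) :
    bigQ α β c n = monicRecPoly (bcoef α β c) (ucoef α β c) n := by
  induction n using Nat.twoStepInduction with
  | zero => rfl
  | one => rfl
  | more n ih₀ ih₁ => rw [bigQ, ih₀, ih₁, monicRecPoly_add_two]

theorem bigQ_succ_eq_add (c : ℂ) (h : ∀ k ≤ n, α + β + 2 * k ≠ 0 ∧ α + β + 2 * k + 2 ≠ 0) :
    bigQ α β c (n + 1) =
      monicRecPoly (fun k => (-1) ^ k) (gegenbauerCoef (c ^ 2 - 1) α β) (n + 1) +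
        C (connectionCoef α β c (n + 1)) *
          monicRecPoly (fun k => (-1) ^ k) (gegenbauerCoef (c ^ 2 - 1) α β) n := by
  rw [bigQ_eq_monicRecPoly]
  refine monicRecPoly_succ_eq_add (connectionCoef_zero α β c)
    (fun k hk => bcoef_eq_add_sub c (h k hk).1 (h k hk).2) (fun k hk => ?_)
    (fun k _ => ucoef_succ_mul_connectionCoef α β c (k + 1))
  rw [ucoef_eq_sub_mul c (h (k + 1) hk).1 (h (k + 1) hk).2, pow_succ]
  ring

end BigQ

/-- For `α = -2N-1` one has `Q_{2N+1}(x; -2N-1, β, c) = (x²-1)^N (x-1)`. -/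
theorem bigQ_degenerate_alpha (N : ℕ) (hN : 1 ≤ N) (β c : ℂ)
    (hc1 : c ≠ 1) (hc2 : c ≠ -1)
    (hden : ∀ n : ℕ, n ≤ 2 * N + 1 →
      (-2 * (N : ℂ) - 1) + β + 2 * n ≠ 0 ∧ (-2 * (N : ℂ) - 1) + β + 2 * n + 2 ≠ 0) :
    bigQ (-2 * (N : ℂ) - 1) β c (2 * N + 1)
      = (X ^ 2 - 1) ^ N * (X - 1) := by
  have hr : connectionCoef (-2 * (N : ℂ) - 1) β c (2 * N + 1) = 0 := by
    simp [connectionCoef]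
  have ha : Function.Periodic (fun k : ℕ => (-1 : ℂ) ^ k) 2 := fun k => by simp [pow_add]
  rw [bigQ_succ_eq_add c fun k hk => hden k (by omega), hr,
    monicRecPoly_gegenbauerCoef_eq_mul_pow ha _ (by ring)
      fun k hk => (hden k (mem_Icc.1 hk).2).1]
  simp only [pow_zero, pow_one, map_neg, map_one, map_zero]
  ring
end

section
/- Let N be a positive integer and α, c ∈ ℂ with c ≠ ±1, and assume the recurrence coefficients at parameters (α, -2N-1, c) are well-defined for 0 ≤ n ≤ 2N+1. Let Q_n(x) be the monic polynomials defined by Q_{-1} = 0, Q_0 = 1, and Q_{n+1}(x) = (x - b_n) Q_n(x) - u_n Q_{n-1}(x). Then Q_{2N+1}(x) = (x²-c²)^N (x+c). -/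
open Polynomial Finset

/-!
Write `b_n = 1 - A_n - C_n` and `u_n = A_{n-1} C_n`, where `A_n + C_{n+1} = 1 + (-1)^n c`. The
Darboux transform of this factorisation at `x = 1` replaces `Q_n` by polynomials `S_n` with diagonal
coefficients `-(-1)^n c` and subdiagonal coefficients `A_n C_n`, and `Q_n = S_n - C_n S_{n-1}`. As
the diagonal of `S_n` alternates in sign, `S_{2m}` and `S_{2m+1} / (x + c)` are polynomials in
`x² - c²`, namely Jacobi polynomials. At `β = -2N-1` the coefficient `C_{2N+1}` vanishes, so
`Q_{2N+1} = S_{2N+1}`, and the Jacobi polynomial in `S_{2N+1}` degenerates to a pure power.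
-/

section Jacobi

variable {K : Type*} [Field K]

/-- The quotient `(a)_n / (b)_n` of rising factorials. -/
def pochhammerRatio (a b : K) (n : ℕ) : K :=
  ∏ i ∈ range n, (a + i) / (b + i)

lemma pochhammerRatio_succ (a b : K) (n : ℕ) :
    pochhammerRatio a b (n + 1) = pochhammerRatio a b n * ((a + n) / (b + n)) :=
  prod_range_succ _ _

lemma pochhammerRatio_succ' (a b : K) (n : ℕ) :
    pochhammerRatio a b (n + 1) = a / b * pochhammerRatio (a + 1) (b + 1) n := by
  rw [pochhammerRatio, prod_range_succ', mul_comm, pochhammerRatio]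
  simp [add_assoc, add_comm (1 : K)]

lemma pochhammerRatio_add_one_right (a : K) {b : K} {n : ℕ} (hb : ∀ i ≤ n, b + (i : ℕ) ≠ 0) :
    pochhammerRatio a (b + 1) n = pochhammerRatio a b n * (b / (b + n)) := by
  induction n with
  | zero =>
    have hb₀ : b ≠ 0 := by simpa using hb 0 le_rfl
    simp [pochhammerRatio, hb₀]
  | succ n ih =>
    have hn := hb n n.le_succ
    rw [pochhammerRatio_succ, ih fun i hi => hb i (hi.trans n.le_succ), pochhammerRatio_succ]
    push_cast
    rw [add_right_comm b 1, ← add_assoc b]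
    field_simp

lemma pochhammerRatio_succ_add_one_add_one (a : K) {b : K} {n : ℕ}
    (hb : ∀ i ≤ n + 1, b + (i : ℕ) ≠ 0) :
    pochhammerRatio (a + 1) (b + 1) (n + 1) = pochhammerRatio a b (n + 1)
      + (n + 1) * (b - a) / ((b + n) * (b + n + 1)) * pochhammerRatio (a + 1) b n := by
  have hb₀ : b ≠ 0 := by simpa using hb 0 (Nat.zero_le _)
  have hn := hb n n.le_succ
  have hn' : b + n + 1 ≠ 0 := by simpa [add_assoc] using hb (n + 1) le_rfl
  rw [pochhammerRatio_succ, pochhammerRatio_succ',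
    pochhammerRatio_add_one_right (a + 1) fun i hi => hb i (hi.trans n.le_succ),
    add_right_comm b 1]
  field_simp
  ring

/-- The monic Jacobi polynomial of degree `m` in the scaled variable `-x / q`: a multiple of
`₂F₁(-m, b + m; a; -x / q)`, normalised so that `q = 0` and `a ∈ {0, -1, -2, …}` are allowed. -/
noncomputable def monicJacobi (q a b : K) (m : ℕ) : K[X] :=
  ∑ j ∈ range (m + 1),
    monomial j (m.choose j * q ^ (m - j) * pochhammerRatio (a + j) (b + m + j) (m - j))

lemma coeff_monicJacobi (q a b : K) {m j d : ℕ} (h : j + d = m) :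
    (monicJacobi q a b m).coeff j =
      m.choose j * q ^ d * pochhammerRatio (a + j) (b + m + j) d := by
  have hj : j < m + 1 := by omega
  simp [monicJacobi, finsetSum_coeff, coeff_monomial, hj, show m - j = d by omega]

lemma coeff_monicJacobi_of_lt (q a b : K) {m j : ℕ} (h : m < j) :
    (monicJacobi q a b m).coeff j = 0 := by
  have : ¬ j < m + 1 := by omega
  simp [monicJacobi, finsetSum_coeff, coeff_monomial, this]

lemma coeff_monicJacobi_self (q a b : K) (m : ℕ) : (monicJacobi q a b m).coeff m = 1 := by
  simp [coeff_monicJacobi q a b (add_zero m), pochhammerRatio]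

lemma monicJacobi_zero (q a b : K) : monicJacobi q a b 0 = 1 := by
  simp [monicJacobi, pochhammerRatio]

lemma monicJacobi_eq_X_pow (q b : K) {a : K} {m : ℕ} (h : a + m = 1) :
    monicJacobi q a b m = X ^ m := by
  ext j
  rw [coeff_X_pow]
  rcases lt_trichotomy j m with hj | rfl | hj
  · obtain ⟨d, rfl⟩ := Nat.exists_eq_add_of_lt hj
    have hroot : a + j + d = 0 := by
      push_cast at h
      linear_combination h
    simp [hj.ne, coeff_monicJacobi q a b (add_assoc j d 1).symm, pochhammerRatio_succ, hroot]
  · simp [coeff_monicJacobi_self]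
  · rw [if_neg hj.ne', coeff_monicJacobi_of_lt _ _ _ hj]

lemma coeff_monicJacobi_add_one_add_one (q a : K) {b : K} {m j : ℕ} (hj : j ≤ m)
    (hb : ∀ i : ℕ, m + 1 ≤ i → i ≤ 2 * (m + 1) → b + i ≠ 0) :
    (monicJacobi q (a + 1) (b + 1) (m + 1)).coeff j = (monicJacobi q a b (m + 1)).coeff j
      + q * ((m + 1) * (b - a + (m + 1))) / ((b + 2 * m + 1) * (b + 2 * m + 2))
        * (monicJacobi q (a + 1) (b + 1) m).coeff j := by
  obtain ⟨d, hd⟩ := Nat.exists_eq_add_of_le hj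
  have hm : (m : K) = j + d := by exact_mod_cast congrArg ((↑) : ℕ → K) hd
  obtain ⟨B, hB⟩ : ∃ B, B = b + (m + 1) + j := ⟨_, rfl⟩
  have hBi : ∀ i ≤ d + 1, B + (i : ℕ) ≠ 0 := fun i hi => by
    convert hb (m + 1 + j + i) (by omega) (by omega) using 1
    rw [hB]
    push_cast
    ring
  have hchoose : (m.choose j : K) * (m + 1) = (m + 1).choose j * (d + 1) := by
    have := Nat.choose_mul_succ_eq m j
    rw [show m + 1 - j = d + 1 by omega] at this
    exact_mod_cast congrArg ((↑) : ℕ → K) this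
  rw [coeff_monicJacobi _ _ _ (d := d + 1) (by omega),
    coeff_monicJacobi _ _ _ (d := d + 1) (by omega), coeff_monicJacobi _ _ _ hd.symm]
  push_cast
  rw [show a + 1 + (j : K) = a + j + 1 by ring,
    show b + 1 + (m + 1) + (j : K) = B + 1 by rw [hB]; ring,
    show b + 1 + m + (j : K) = B by rw [hB]; ring, ← hB,
    pochhammerRatio_succ_add_one_add_one (a + j) hBi,
    show b + 2 * m + 1 = B + d by rw [hB, hm]; ring,
    show b + 2 * m + 2 = B + d + 1 by rw [hB, hm]; ring,
    show b - a + (m + 1) = B - (a + j) by rw [hB]; ring]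
  linear_combination -(q ^ (d + 1) * (B - (a + j)) / ((B + d) * (B + d + 1))
    * pochhammerRatio (a + j + 1) B d) * hchoose

lemma monicJacobi_add_one_add_one (q a : K) {b : K} {m : ℕ}
    (hb : ∀ i : ℕ, m ≤ i → i ≤ 2 * m → b + i ≠ 0) :
    monicJacobi q (a + 1) (b + 1) m = monicJacobi q a b m
      + C (q * (m * (b - a + m)) / ((b + 2 * m - 1) * (b + 2 * m)))
        * monicJacobi q (a + 1) (b + 1) (m - 1) := by
  rcases m with _ | m
  · simp [monicJacobi_zero]
  ext j
  rw [coeff_add, coeff_C_mul, Nat.add_sub_cancel]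
  rcases lt_trichotomy j (m + 1) with hj | rfl | hj
  · rw [coeff_monicJacobi_add_one_add_one q a (Nat.lt_succ_iff.mp hj) hb]
    push_cast
    ring_nf
  · simp [coeff_monicJacobi_self, coeff_monicJacobi_of_lt]
  · simp [coeff_monicJacobi_of_lt, hj, m.lt_succ_self.trans hj]

lemma coeff_zero_monicJacobi_succ (q a : K) {b : K} {m : ℕ}
    (hb : ∀ i : ℕ, m ≤ i → i ≤ 2 * m + 1 → b + i ≠ 0) :
    (monicJacobi q a b (m + 1)).coeff 0 =
      q * ((a + m) * (b + m)) / ((b + 2 * m) * (b + 2 * m + 1))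
        * (monicJacobi q a b m).coeff 0 := by
  have hB : ∀ i ≤ m + 1, b + m + (i : ℕ) ≠ 0 := fun i hi => by
    convert hb (m + i) (by omega) (by omega) using 1
    push_cast
    ring
  rw [coeff_monicJacobi q a b (zero_add (m + 1)), coeff_monicJacobi q a b (zero_add m)]
  push_cast
  rw [add_zero, add_zero, add_zero, ← add_assoc, pochhammerRatio_add_one_right a hB,
    pochhammerRatio_succ]
  push_cast
  simp only [Nat.choose_zero_right, Nat.cast_one]
  rw [show b + m + (m + 1) = b + 2 * m + 1 by ring, show b + m + m = b + 2 * m by ring]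
  field_simp
  ring

lemma coeff_succ_monicJacobi_succ (q a : K) {b : K} {m j : ℕ} (hj : j < m)
    (hb : ∀ i : ℕ, m ≤ i → i ≤ 2 * m + 1 → b + i ≠ 0) :
    (monicJacobi q a b (m + 1)).coeff (j + 1) = (monicJacobi q (a + 1) (b + 1) m).coeff j
      + q * ((a + m) * (b + m)) / ((b + 2 * m) * (b + 2 * m + 1))
        * (monicJacobi q a b m).coeff (j + 1) := by
  obtain ⟨d, hd⟩ := Nat.exists_eq_add_of_le (Nat.succ_le_of_lt hj)
  have hm : (m : K) = j + 1 + d := by exact_mod_cast congrArg ((↑) : ℕ → K) hd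
  obtain ⟨B, hB⟩ : ∃ B, B = b + m + (j + 1) := ⟨_, rfl⟩
  have hBi : ∀ i ≤ d + 1, B + (i : ℕ) ≠ 0 := fun i hi => by
    convert hb (m + (j + 1) + i) (by omega) (by omega) using 1
    rw [hB]
    push_cast
    ring
  have hchoose : (m.choose (j + 1) : K) * (j + 1) = m.choose j * (d + 1) := by
    have := Nat.choose_succ_right_eq m j
    rw [show m - j = d + 1 by omega] at this
    exact_mod_cast congrArg ((↑) : ℕ → K) this
  rw [coeff_monicJacobi _ _ _ (d := d + 1) (by omega),
    coeff_monicJacobi _ _ _ (d := d + 1) (by omega), coeff_monicJacobi _ _ _ hd.symm]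
  have hd₀ := hBi d d.le_succ
  have hd₁ : B + d + 1 ≠ 0 := by simpa [add_assoc] using hBi (d + 1) le_rfl
  push_cast
  rw [show a + 1 + (j : K) = a + (j + 1) by ring,
    show b + (m + 1) + (j + 1) = B + 1 by rw [hB]; ring,
    show b + 1 + m + (j : K) = B by rw [hB]; ring, ← hB,
    pochhammerRatio_add_one_right _ hBi, pochhammerRatio_succ, Nat.choose_succ_succ',
    show a + (m : K) = a + (j + 1) + d by rw [hm]; ring,
    show b + (m : K) = B - (j + 1) by rw [hB]; ring,
    show b + 2 * m = B + d by rw [hB, hm]; ring]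
  push_cast
  rw [← add_assoc B]
  field_simp
  linear_combination
    q * q ^ d * (a + (j + 1) + d) * pochhammerRatio (a + (j + 1)) B d * hchoose

lemma monicJacobi_succ (q a : K) {b : K} {m : ℕ}
    (hb : ∀ i : ℕ, m ≤ i → i ≤ 2 * m + 1 → b + i ≠ 0) :
    monicJacobi q a b (m + 1) = X * monicJacobi q (a + 1) (b + 1) m
      + C (q * ((a + m) * (b + m)) / ((b + 2 * m) * (b + 2 * m + 1))) * monicJacobi q a b m := by
  ext j
  rcases j with _ | j
  · simpa using coeff_zero_monicJacobi_succ q a hb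
  rw [coeff_add, coeff_X_mul, coeff_C_mul]
  rcases lt_trichotomy j m with hj | rfl | hj
  · exact coeff_succ_monicJacobi_succ q a hj hb
  · simp [coeff_monicJacobi_self, coeff_monicJacobi_of_lt]
  · simp [coeff_monicJacobi_of_lt, hj, hj.trans j.lt_succ_self]

end Jacobi

/-- The coefficient `C_n` in the factorisation `b_n = 1 - A_n - C_n`, `u_n = A_{n-1} C_n` of the
recurrence coefficients of `bigQ`. -/
noncomputable def bigQLower (α β c : ℂ) (n : ℕ) : ℂ :=
  if Even n then (1 - c) * n / (α + β + 2 * n) else (1 + c) * (β + n) / (α + β + 2 * n)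

/-- The coefficient `A_n` in the factorisation `b_n = 1 - A_n - C_n`, `u_n = A_{n-1} C_n` of the
recurrence coefficients of `bigQ`, encoded through `A_n + C_{n+1} = 1 + (-1)^n c`. -/
noncomputable def bigQUpper (α β c : ℂ) (n : ℕ) : ℂ :=
  1 + (-1) ^ n * c - bigQLower α β c (n + 1)

/-- The monic Chihara polynomials `S_n`, the Darboux transform of `bigQ` at `x = 1`:
`x S_n = S_{n+1} - (-1)^n c S_n + A_n C_n S_{n-1}`. -/
noncomputable def chihara (α β c : ℂ) : ℕ → ℂ[X]
  | 0 => 1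
  | 1 => X + C c
  | n + 2 => (X + C ((-1) ^ (n + 1) * c)) * chihara α β c (n + 1)
      - C (bigQUpper α β c (n + 1) * bigQLower α β c (n + 1)) * chihara α β c n

section BigQ

variable (α β c : ℂ)

lemma bigQLower_zero : bigQLower α β c 0 = 0 := by
  simp [bigQLower]

lemma bcoef_eq (n : ℕ) : bcoef α β c n = 1 - bigQUpper α β c n - bigQLower α β c n := by
  rcases n.even_or_odd with hn | hn
  · have hn' : ¬ Even (n + 1) := by simpa [Nat.even_add_one] using hn
    simp only [bcoef, bigQUpper, bigQLower, hn, hn', if_true, if_false, hn.neg_one_pow]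
    push_cast
    ring
  · have hn' : Even (n + 1) := hn.add_one
    simp only [bcoef, bigQUpper, bigQLower, Nat.not_even_iff_odd.mpr hn, hn', if_true, if_false,
      hn.neg_one_pow]
    push_cast
    ring

lemma bigQUpper_of_even {n : ℕ} (hn : Even n) (h : α + β + 2 * n + 2 ≠ 0) :
    bigQUpper α β c n = (1 + c) * (α + n + 1) / (α + β + 2 * n + 2) := by
  have hn' : ¬ Even (n + 1) := by simpa [Nat.even_add_one] using hn
  rw [bigQUpper, bigQLower, if_neg hn', hn.neg_one_pow, eq_div_iff h]
  push_cast
  rw [mul_add_one (2 : ℂ), ← add_assoc (α + β), sub_mul, div_mul_cancel₀ _ h]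
  ring

lemma bigQUpper_of_odd {n : ℕ} (hn : Odd n) (h : α + β + 2 * n + 2 ≠ 0) :
    bigQUpper α β c n = (1 - c) * (α + β + n + 1) / (α + β + 2 * n + 2) := by
  rw [bigQUpper, bigQLower, if_pos hn.add_one, hn.neg_one_pow, eq_div_iff h]
  push_cast
  rw [mul_add_one (2 : ℂ), ← add_assoc (α + β), sub_mul, div_mul_cancel₀ _ h]
  ring

lemma ucoef_succ (n : ℕ) :
    ucoef α β c (n + 1) = bigQUpper α β c n * bigQLower α β c (n + 1) := by
  rcases eq_or_ne (α + β + 2 * n + 2) 0 with h | h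
  · simp [ucoef, bigQLower, mul_add_one, ← add_assoc, h]
  rcases n.even_or_odd with hn | hn
  · have hn' : ¬ Even (n + 1) := by simpa [Nat.even_add_one] using hn
    rw [ucoef, if_neg hn', bigQUpper_of_even _ _ _ hn h, bigQLower, if_neg hn']
    push_cast
    rw [div_mul_div_comm]
    congr 1 <;> ring
  · rw [ucoef, if_pos hn.add_one, bigQUpper_of_odd _ _ _ hn h, bigQLower, if_pos hn.add_one]
    push_cast
    rw [div_mul_div_comm]
    congr 1 <;> ring

lemma chihara_succ (n : ℕ) :
    chihara α β c (n + 1) = (X + C ((-1) ^ n * c)) * chihara α β c n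
      - C (bigQUpper α β c n * bigQLower α β c n) * chihara α β c (n - 1) := by
  rcases n with _ | n
  · simp [chihara, bigQLower_zero]
  · rfl

theorem bigQ_eq_chihara_sub (n : ℕ) :
    bigQ α β c n = chihara α β c n - C (bigQLower α β c n) * chihara α β c (n - 1) := by
  induction n using Nat.twoStepInduction with
  | zero => simp [bigQ, chihara, bigQLower_zero]
  | one =>
    simp only [bigQ, chihara, bcoef_eq, bigQUpper, bigQLower_zero, Nat.sub_self, zero_add, pow_zero,
      one_mul, sub_zero, C_sub, C_add, C_1]
    ring
  | more n ih₀ ih₁ =>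
    rw [Nat.add_sub_cancel] at ih₁
    have hA : ∀ k, C (bigQUpper α β c k)
        = 1 + (-1) ^ k * C c - C (bigQLower α β c (k + 1)) := fun k => by simp [bigQUpper]
    have hS := chihara_succ α β c n
    rw [bigQ, ih₀, ih₁, show n + 2 - 1 = n + 1 by omega, chihara_succ α β c (n + 1),
      Nat.add_sub_cancel, bcoef_eq, ucoef_succ]
    simp only [C_sub, C_mul, C_1, C_pow, C_neg, hA] at hS ⊢
    linear_combination C (bigQLower α β c (n + 1)) * hS

lemma bigQUpper_mul_bigQLower_two_mul {m : ℕ} (h : α + β + 2 * (2 * m : ℕ) + 2 ≠ 0) :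
    -(bigQUpper α β c (2 * m) * bigQLower α β c (2 * m)) =
      (c ^ 2 - 1) * (m * ((α + β) / 2 + 1 - (β + 1) / 2 + m))
        / (((α + β) / 2 + 1 + 2 * m - 1) * ((α + β) / 2 + 1 + 2 * m)) := by
  rw [bigQUpper_of_even _ _ _ (even_two_mul m) h, bigQLower,
    if_pos (even_two_mul m), div_mul_div_comm, ← neg_div]
  refine Eq.trans ?_ (mul_div_mul_left _ _ (by norm_num : (4 : ℂ) ≠ 0))
  push_cast
  congr 1 <;> ring

lemma bigQUpper_mul_bigQLower_two_mul_add_one {m : ℕ} (h : α + β + 2 * (2 * m + 1 : ℕ) + 2 ≠ 0) :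
    -(bigQUpper α β c (2 * m + 1) * bigQLower α β c (2 * m + 1)) =
      (c ^ 2 - 1) * (((β + 1) / 2 + m) * ((α + β) / 2 + 1 + m))
        / (((α + β) / 2 + 1 + 2 * m) * ((α + β) / 2 + 1 + 2 * m + 1)) := by
  have hodd : Odd (2 * m + 1) := odd_two_mul_add_one m
  rw [bigQUpper_of_odd _ _ _ hodd h, bigQLower,
    if_neg (Nat.not_even_iff_odd.mpr hodd), div_mul_div_comm, ← neg_div]
  refine Eq.trans ?_ (mul_div_mul_left _ _ (by norm_num : (4 : ℂ) ≠ 0))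
  push_cast
  congr 1 <;> ring

theorem chihara_eq_monicJacobi_comp {m : ℕ}
    (h : ∀ i : ℕ, i ≤ 2 * m → α + β + 2 * i + 2 ≠ 0) :
    chihara α β c (2 * m) =
        (monicJacobi (c ^ 2 - 1) ((β + 1) / 2) ((α + β) / 2 + 1) m).comp (X ^ 2 - C (c ^ 2)) ∧
      chihara α β c (2 * m + 1) = (X + C c) *
        (monicJacobi (c ^ 2 - 1) ((β + 1) / 2 + 1) ((α + β) / 2 + 1 + 1) m).comp
          (X ^ 2 - C (c ^ 2)) := by
  have hb : ∀ i : ℕ, i ≤ 2 * m → (α + β) / 2 + 1 + i ≠ 0 := fun i hi h₀ =>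
    h i hi (by linear_combination 2 * h₀)
  induction m with
  | zero => simp [chihara, monicJacobi_zero]
  | succ m ih =>
    obtain ⟨hev, hod⟩ := ih (fun i hi => h i (by omega)) (fun i hi => hb i (by omega))
    have hev' : chihara α β c (2 * (m + 1)) =
        (monicJacobi (c ^ 2 - 1) ((β + 1) / 2) ((α + β) / 2 + 1) (m + 1)).comp
          (X ^ 2 - C (c ^ 2)) := by
      rw [mul_add_one, chihara_succ, Nat.add_sub_cancel, hev, hod,
        monicJacobi_succ _ _ (fun i _ hi => hb i (by omega)),
        ← bigQUpper_mul_bigQLower_two_mul_add_one α β c (h (2 * m + 1) (by omega))]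
      simp only [(odd_two_mul_add_one m).neg_one_pow, neg_mul, one_mul, map_neg, map_pow, map_mul,
        add_comp, mul_comp, X_comp, neg_comp, C_comp]
      ring
    refine ⟨hev', ?_⟩
    rw [chihara_succ, hev', show 2 * (m + 1) - 1 = 2 * m + 1 by omega, hod,
      monicJacobi_add_one_add_one _ _ (fun i _ hi => hb i hi),
      ← bigQUpper_mul_bigQLower_two_mul α β c (h (2 * (m + 1)) le_rfl), Nat.add_sub_cancel]
    simp only [(even_two_mul (m + 1)).neg_one_pow, one_mul, map_pow, map_mul, map_neg, neg_mul,
      add_comp, neg_comp, mul_comp, C_comp]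
    ring

end BigQ

/-- For `β = -2N-1` one has `Q_{2N+1}(x; α, -2N-1, c) = (x²-c²)^N (x+c)`. -/
theorem bigQ_degenerate_beta (N : ℕ) (hN : 1 ≤ N) (α c : ℂ)
    (hc1 : c ≠ 1) (hc2 : c ≠ -1)
    (hden : ∀ n : ℕ, n ≤ 2 * N + 1 →
      α + (-2 * (N : ℂ) - 1) + 2 * n ≠ 0 ∧ α + (-2 * (N : ℂ) - 1) + 2 * n + 2 ≠ 0) :
    bigQ α (-2 * (N : ℂ) - 1) c (2 * N + 1)
      = (X ^ 2 - C (c ^ 2)) ^ N * (X + C c) := by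
  set β : ℂ := -2 * N - 1 with hβ
  have hlower : bigQLower α β c (2 * N + 1) = 0 := by
    simp [bigQLower, hβ]
  have hjacobi : monicJacobi (c ^ 2 - 1) ((β + 1) / 2 + 1) ((α + β) / 2 + 1 + 1) N = X ^ N :=
    monicJacobi_eq_X_pow _ _ (by rw [hβ]; ring)
  have hchihara := (chihara_eq_monicJacobi_comp α β c (m := N) fun i hi => (hden i (by omega)).2).2
  rw [hjacobi] at hchihara
  rw [bigQ_eq_chihara_sub, hlower, hchihara]
  simp [mul_comm]
end

section
/- Let N ∈ ℕ, m ∈ ℕ₀, α, c ∈ ℂ, c ≠ ±1, with all recurrence coefficients well-defined. Then the big -1 Jacobi polynomials factorize as Q_{2N+1+m}(x; α, -2N-1, c) = (x²-c²)^N (x+c) · Q_m(x; α, 2N+1, -c), where Q_n(x; α, β, c) are the monic polynomials generated by the three-term recurrence. -/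
open Polynomial Finset

/-!
Changing `β` to `β + 2` multiplies the orthogonality weight by `x² - c²`, so there is a Christoffel
transformation
`(x² - c²) Qₙ(x; α, β + 2, c) = Qₙ₊₂(x; α, β, c) + vₙ Qₙ₊₁(x; α, β, c) + wₙ Qₙ(x; α, β, c)`,
proved by checking that the right-hand side satisfies the three-term recurrence for `β + 2`.
For odd `n` both `vₙ` and `wₙ` contain the factor `β + n + 2`, so at `β = -n - 2` the relation
collapses to `Qₙ₊₂(x; α, -n - 2, c) = (x² - c²) Qₙ(x; α, -n, c)`, and descending to
`Q₁(x; α, -1, c) = x + c` produces the factor `(x² - c²)^N (x + c)`. The other factor appears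
because, for odd `k` and `β = -k`, the recurrence restarts at index `k`: `uₖ` vanishes, and from
there on the coefficients are those of the parameters `α, k, -c`.
-/

lemma ucoef_zero (α β c : ℂ) : ucoef α β c 0 = 0 := by
  simp [ucoef]

-- The truncated index `n - 1` at `n = 0` is harmless, because `ucoef α β c 0 = 0`.
lemma bigQ_succ (α β c : ℂ) (n : ℕ) :
    bigQ α β c (n + 1) =
      (X - C (bcoef α β c n)) * bigQ α β c n - C (ucoef α β c n) * bigQ α β c (n - 1) := by
  cases n with
  | zero => simp [bigQ, ucoef_zero]
  | succ n => rw [bigQ, Nat.add_sub_cancel]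

/-- The coefficient `vₙ` of `Qₙ₊₁` in the Christoffel transformation `β ↦ β + 2`; its closed form
solves `vₙ₊₁ - vₙ = bₙ₊₂(α, β, c) - bₙ(α, β + 2, c)`. -/
noncomputable def christoffelV (α β c : ℂ) (n : ℕ) : ℂ :=
  -2 * (if Even n then (c - 1) * (α + β + n + 2) else (c + 1) * (β + n + 2)) /
    ((α + β + 2 * n + 2) * (α + β + 2 * n + 4))

/-- The coefficient `wₙ` of `Qₙ` in the Christoffel transformation `β ↦ β + 2`; its closed form
solves `wₙ₊₁ uₙ₊₁(α, β, c) = uₙ₊₁(α, β + 2, c) wₙ`. -/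
noncomputable def christoffelW (α β c : ℂ) (n : ℕ) : ℂ :=
  (1 - c ^ 2) * (if Even n then (α + β + n + 2) * (β + n + 1) else (α + β + n + 1) * (β + n + 2)) /
    (α + β + 2 * n + 2) ^ 2

/-- The Christoffel transform of the sequence `Qₙ(·; α, β, c)` at the points `±c`, as the
combination `Qₙ₊₂ + vₙ Qₙ₊₁ + wₙ Qₙ`, i.e. already multiplied by `x² - c²`. -/
noncomputable def christoffelTransform (α β c : ℂ) (n : ℕ) : ℂ[X] :=
  bigQ α β c (n + 2) + C (christoffelV α β c n) * bigQ α β c (n + 1)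
    + C (christoffelW α β c n) * bigQ α β c n

section Christoffel

variable {α β : ℂ} (c : ℂ) (n : ℕ)

lemma christoffelV_zero (h₂ : α + β + 2 ≠ 0) (h₄ : α + β + 4 ≠ 0) :
    christoffelV α β c 0 = bcoef α β c 0 + bcoef α β c 1 := by
  generalize hD : α + β = D at *
  obtain rfl : α = D - β := by linear_combination hD
  simp only [christoffelV, bcoef, Even.zero, Nat.not_even_one, if_true, if_false, Nat.cast_zero,
    Nat.cast_one, mul_zero, mul_one, add_zero, zero_div, hD]
  norm_num only [add_assoc]
  field_simp
  ring

lemma christoffelW_zero (h₂ : α + β + 2 ≠ 0) :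
    christoffelW α β c 0 = ucoef α β c 1 + bcoef α β c 0 ^ 2 - c ^ 2 := by
  generalize hD : α + β = D at *
  obtain rfl : α = D - β := by linear_combination hD
  simp only [christoffelW, bcoef, ucoef, Even.zero, Nat.not_even_one, if_true, if_false,
    Nat.cast_zero, Nat.cast_one, mul_zero, mul_one, add_zero, zero_div, hD]
  field_simp
  ring

lemma christoffelV_succ (h₂ : α + β + 2 * n + 2 ≠ 0) (h₄ : α + β + 2 * n + 4 ≠ 0)
    (h₆ : α + β + 2 * n + 6 ≠ 0) :
    christoffelV α β c (n + 1) =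
      christoffelV α β c n + bcoef α β c (n + 2) - bcoef α (β + 2) c n := by
  generalize hD : α + β + 2 * n = D at *
  obtain rfl : α = D - β - 2 * n := by linear_combination hD
  have e₁ : D - β - 2 * n + β + 2 * (n + 1) = D + 2 := by ring
  have e₂ : D - β - 2 * n + β + 2 * (n + 2) = D + 4 := by ring
  have e₃ : D - β - 2 * n + (β + 2) + 2 * n = D + 2 := by ring
  by_cases hn : Even n <;>
    simp only [christoffelV, bcoef, hn, Nat.even_add_one, if_true, if_false, not_true_eq_false,
      not_false_eq_true, Nat.cast_add, Nat.cast_one, Nat.cast_ofNat, hD, e₁, e₂, e₃] <;>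
    norm_num only [add_assoc] <;> field_simp <;> ring

lemma christoffelW_succ (h₂ : α + β + 2 * n + 2 ≠ 0) (h₄ : α + β + 2 * n + 4 ≠ 0) :
    christoffelW α β c (n + 1) =
      christoffelW α β c n + ucoef α β c (n + 2)
        + christoffelV α β c n * (bcoef α β c (n + 1) - bcoef α (β + 2) c n)
        - ucoef α (β + 2) c n := by
  generalize hD : α + β + 2 * n = D at *
  obtain rfl : α = D - β - 2 * n := by linear_combination hD
  have e₁ : D - β - 2 * n + β + 2 * (n + 1) = D + 2 := by ring
  have e₂ : D - β - 2 * n + β + 2 * (n + 2) = D + 4 := by ring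
  have e₃ : D - β - 2 * n + (β + 2) + 2 * n = D + 2 := by ring
  by_cases hn : Even n <;>
    simp only [christoffelV, christoffelW, bcoef, ucoef, hn, Nat.even_add_one, if_true, if_false,
      not_true_eq_false, not_false_eq_true, Nat.cast_add, Nat.cast_one, Nat.cast_ofNat,
      hD, e₁, e₂, e₃] <;>
    norm_num only [add_assoc] <;> field_simp <;> ring

lemma christoffelV_mul_ucoef_zero (h₂ : α + β + 2 ≠ 0) (h₄ : α + β + 4 ≠ 0) :
    christoffelV α β c 0 * ucoef α β c 1
      + christoffelW α β c 0 * (bcoef α β c 0 - bcoef α (β + 2) c 0) = 0 := by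
  generalize hD : α + β = D at *
  obtain rfl : α = D - β := by linear_combination hD
  have e₃ : D - β + (β + 2) = D + 2 := by ring
  simp only [christoffelV, christoffelW, bcoef, ucoef, Even.zero, Nat.not_even_one, if_true,
    if_false, Nat.cast_zero, Nat.cast_one, mul_zero, add_zero, zero_div, hD, e₃]
  norm_num only [add_assoc]
  field_simp
  ring

lemma christoffelV_mul_ucoef_succ (h₂ : α + β + 2 * n + 2 ≠ 0) (h₄ : α + β + 2 * n + 4 ≠ 0)
    (h₆ : α + β + 2 * n + 6 ≠ 0) :
    christoffelV α β c (n + 1) * ucoef α β c (n + 2)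
        + christoffelW α β c (n + 1) * (bcoef α β c (n + 1) - bcoef α (β + 2) c (n + 1)) =
      ucoef α (β + 2) c (n + 1) * christoffelV α β c n := by
  generalize hD : α + β + 2 * n = D at *
  obtain rfl : α = D - β - 2 * n := by linear_combination hD
  have e₁ : D - β - 2 * n + β + 2 * (n + 1) = D + 2 := by ring
  have e₂ : D - β - 2 * n + β + 2 * (n + 2) = D + 4 := by ring
  have e₃ : D - β - 2 * n + (β + 2) + 2 * (n + 1) = D + 4 := by ring
  by_cases hn : Even n <;>
    simp only [christoffelV, christoffelW, bcoef, ucoef, hn, Nat.even_add_one, if_true, if_false,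
      not_true_eq_false, not_false_eq_true, Nat.cast_add, Nat.cast_one, Nat.cast_ofNat,
      hD, e₁, e₂, e₃] <;>
    norm_num only [add_assoc] <;> field_simp <;> ring

lemma christoffelW_succ_mul_ucoef (h₂ : α + β + 2 * n + 2 ≠ 0) (h₄ : α + β + 2 * n + 4 ≠ 0) :
    christoffelW α β c (n + 1) * ucoef α β c (n + 1) =
      ucoef α (β + 2) c (n + 1) * christoffelW α β c n := by
  generalize hD : α + β + 2 * n = D at *
  obtain rfl : α = D - β - 2 * n := by linear_combination hD
  have e₁ : D - β - 2 * n + β + 2 * (n + 1) = D + 2 := by ring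
  have e₃ : D - β - 2 * n + (β + 2) + 2 * (n + 1) = D + 4 := by ring
  by_cases hn : Even n <;>
    simp only [christoffelW, ucoef, hn, Nat.even_add_one, if_true, if_false,
      not_true_eq_false, not_false_eq_true, Nat.cast_add, Nat.cast_one, hD, e₁, e₃] <;>
    norm_num only [add_assoc] <;> field_simp <;> ring

lemma christoffelTransform_zero (h₂ : α + β + 2 ≠ 0) (h₄ : α + β + 4 ≠ 0) :
    christoffelTransform α β c 0 = X ^ 2 - C (c ^ 2) := by
  simp only [christoffelTransform, bigQ, christoffelV_zero c h₂ h₄, christoffelW_zero c h₂,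
    C_add, C_sub, C_pow]
  ring

variable (hs : ∀ n : ℕ, α + β + 2 * n ≠ 0)
include hs

lemma christoffelTransform_succ :
    christoffelTransform α β c (n + 1) =
      (X - C (bcoef α (β + 2) c n)) * christoffelTransform α β c n
        - C (ucoef α (β + 2) c n) * christoffelTransform α β c (n - 1) := by
  have h₂ (k : ℕ) : α + β + 2 * k + 2 ≠ 0 := by convert hs (k + 1) using 1; push_cast; ring
  have h₄ (k : ℕ) : α + β + 2 * k + 4 ≠ 0 := by convert hs (k + 2) using 1; push_cast; ring
  have h₆ (k : ℕ) : α + β + 2 * k + 6 ≠ 0 := by convert hs (k + 3) using 1; push_cast; ring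
  have hV := congrArg C (christoffelV_succ c n (h₂ _) (h₄ _) (h₆ _))
  have hW := congrArg C (christoffelW_succ c n (h₂ _) (h₄ _))
  have hQ₂ := bigQ_succ α β c (n + 2)
  have hQ₁ := bigQ_succ α β c (n + 1)
  have hQ₀ := bigQ_succ α β c n
  simp only [C_add, C_sub, C_mul] at hV hW
  cases n with
  | zero =>
    have hVu := congrArg C
      (christoffelV_mul_ucoef_zero c (by simpa using h₂ 0) (by simpa using h₄ 0))
    simp only [C_add, C_sub, C_mul, C_0] at hVu
    simp only [christoffelTransform, ucoef_zero, C_0, zero_mul, sub_zero, zero_add,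
      Nat.reduceAdd] at hV hW hQ₂ hQ₁ hQ₀ ⊢
    linear_combination hQ₂ + C (christoffelV α β c 0) * hQ₁ + C (christoffelW α β c 0) * hQ₀
      + bigQ α β c 2 * hV + bigQ α β c 1 * hW - bigQ α β c 0 * hVu
  | succ n =>
    have hVu := congrArg C (christoffelV_mul_ucoef_succ c n (h₂ _) (h₄ _) (h₆ _))
    have hWu := congrArg C (christoffelW_succ_mul_ucoef c n (h₂ _) (h₄ _))
    simp only [C_add, C_sub, C_mul] at hVu hWu
    simp only [christoffelTransform, Nat.add_sub_cancel, add_assoc, Nat.reduceAdd,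
      Nat.add_succ_sub_one] at hV hW hQ₂ hQ₁ hQ₀ hVu hWu ⊢
    linear_combination hQ₂ + C (christoffelV α β c (n + 1)) * hQ₁
      + C (christoffelW α β c (n + 1)) * hQ₀
      + bigQ α β c (n + 3) * hV + bigQ α β c (n + 2) * hW
      - bigQ α β c (n + 1) * hVu - bigQ α β c n * hWu

lemma X_sq_sub_C_mul_bigQ :
    (X ^ 2 - C (c ^ 2)) * bigQ α (β + 2) c n = christoffelTransform α β c n := by
  induction n using Nat.strong_induction_on with
  | _ n ih =>
    cases n with
    | zero =>
      have h₂ : α + β + 2 ≠ 0 := by simpa using hs 1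
      have h₄ : α + β + 4 ≠ 0 := by convert hs 2 using 1; norm_num
      rw [christoffelTransform_zero c h₂ h₄, bigQ, mul_one]
    | succ n =>
      rw [bigQ_succ, christoffelTransform_succ c n hs, ← ih n (by omega), ← ih (n - 1) (by omega)]
      ring

end Christoffel

lemma christoffelV_eq_zero (α c : ℂ) {k : ℕ} (hk : Odd k) :
    christoffelV α (-(k + 2 : ℕ)) c k = 0 := by
  simp [christoffelV, hk]

lemma christoffelW_eq_zero (α c : ℂ) {k : ℕ} (hk : Odd k) :
    christoffelW α (-(k + 2 : ℕ)) c k = 0 := by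
  simp [christoffelW, hk]

lemma bigQ_neg_add_two {α c : ℂ} {k : ℕ} (hk : Odd k)
    (hs : ∀ n : ℕ, α + -(k + 2 : ℕ) + 2 * n ≠ 0) :
    bigQ α (-(k + 2 : ℕ)) c (k + 2) = (X ^ 2 - C (c ^ 2)) * bigQ α (-k) c k := by
  have h := X_sq_sub_C_mul_bigQ c k hs
  rw [christoffelTransform, christoffelV_eq_zero α c hk, christoffelW_eq_zero α c hk] at h
  simpa using h.symm

lemma bigQ_neg_two_mul_add_one {α c : ℂ} {N : ℕ}
    (hs : ∀ n : ℕ, α + -(2 * N + 1 : ℕ) + 2 * n ≠ 0) :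
    bigQ α (-(2 * N + 1 : ℕ)) c (2 * N + 1) = (X ^ 2 - C (c ^ 2)) ^ N * (X + C c) := by
  induction N with
  | zero => simp [bigQ, bcoef]
  | succ N ih =>
    have hs' (n : ℕ) : α + -(2 * N + 1 : ℕ) + 2 * n ≠ 0 := by
      convert hs (n + 1) using 1; push_cast; ring
    rw [show 2 * (N + 1) + 1 = 2 * N + 1 + 2 by ring] at hs ⊢
    rw [bigQ_neg_add_two (odd_two_mul_add_one N) hs, ih hs', pow_succ']
    ring

lemma bcoef_neg_add (α c : ℂ) {k : ℕ} (hk : Odd k) (m : ℕ) :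
    bcoef α (-k) c (k + m) = bcoef α k (-c) m := by
  have hD : α + -k + 2 * (k + m) = α + k + 2 * m := by ring
  by_cases hm : Even m <;>
    simp [bcoef, hm, Nat.even_add, Nat.not_even_iff_odd.mpr hk, hD] <;> ring

lemma ucoef_neg_add (α c : ℂ) {k : ℕ} (hk : Odd k) (m : ℕ) :
    ucoef α (-k) c (k + m) = ucoef α k (-c) m := by
  have hD : α + -k + 2 * (k + m) = α + k + 2 * m := by ring
  by_cases hm : Even m <;>
    simp [ucoef, hm, Nat.even_add, Nat.not_even_iff_odd.mpr hk, hD] <;> ring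

lemma bigQ_neg_add (α c : ℂ) {k : ℕ} (hk : Odd k) (m : ℕ) :
    bigQ α (-k) c (k + m) = bigQ α (-k) c k * bigQ α k (-c) m := by
  induction m using Nat.strong_induction_on with
  | _ m ih =>
    cases m with
    | zero => simp [bigQ]
    | succ m =>
      have hu : C (ucoef α k (-c) m) * bigQ α (-k) c (k + m - 1) =
          C (ucoef α k (-c) m) * (bigQ α (-k) c k * bigQ α k (-c) (m - 1)) := by
        cases m with
        | zero => simp [ucoef_zero]
        | succ m => simp [← add_assoc, ih m (by omega)]
      rw [← add_assoc, bigQ_succ, bigQ_succ α k, bcoef_neg_add α c hk, ucoef_neg_add α c hk, hu,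
        ih m (by omega)]
      ring

/-- Factorization of the big `-1` Jacobi polynomials for `β = -2N-1`:
`Q_{2N+1+m}(x; α, -2N-1, c) = (x²-c²)^N (x+c) Q_m(x; α, 2N+1, -c)`. -/
theorem bigQ_factorization_beta (N : ℕ) (hN : 1 ≤ N) (m : ℕ) (α c : ℂ)
    (hc1 : c ≠ 1) (hc2 : c ≠ -1)
    (hden : ∀ n : ℕ, α - (2 * (N : ℂ) + 1) + 2 * n ≠ 0) :
    bigQ α (-2 * (N : ℂ) - 1) c (2 * N + 1 + m)
      = (X ^ 2 - C (c ^ 2)) ^ N * (X + C c) * bigQ α (2 * (N : ℂ) + 1) (-c) m := by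
  have hβ : 2 * (N : ℂ) + 1 = (2 * N + 1 : ℕ) := by push_cast; rfl
  have hs (n : ℕ) : α + -(2 * N + 1 : ℕ) + 2 * n ≠ 0 := by
    simpa only [hβ, sub_eq_add_neg] using hden n
  rw [neg_mul, ← neg_add', hβ, bigQ_neg_add α c (odd_two_mul_add_one N),
    bigQ_neg_two_mul_add_one hs]
end
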